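/- arXiv:0911.0090 — 2 statements merged into one kernel-verified Lean document; each statement's English description precedes it below -/
import Mathlib

section
/- Let G be a finitely generated group and H a subgroup of finite index in G, and let K be a subgroup of H. Then the pair (G,K) is context-free if and only if the pair (H,K) is context-free. Precisely: for any semigroup presentation ψ' : Σ' → G, the language L(G,K,ψ') = { w ∈ (Σ')* : ψ'(w) ∈ K } is context-free if and only if, for any semigroup presentation ψ : Σ → H, the language L(H,K,ψ) = { w ∈ Σ* : ψ(w) ∈ K } is context-free. -/
namespace CFPair

theorem cf_congr {T : Type} {L L' : Language T} (h : L'.IsContextFree)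
    (h' : ∀ w, w ∈ L ↔ w ∈ L') : L.IsContextFree := by
  have : L = L' := Set.ext h'
  rwa [this]

inductive D {T : Type} (g : ContextFreeGrammar T) : List (Symbol T g.NT) → List T → Prop
  | nil : D g [] []
  | term (a : T) {s : List (Symbol T g.NT)} {w : List T} : D g s w →
      D g (Symbol.terminal a :: s) (a :: w)
  | nt (r : ContextFreeRule T g.NT) {s : List (Symbol T g.NT)} {u w : List T} :
      r ∈ g.rules → D g r.output u → D g s w →
      D g (Symbol.nonterminal r.input :: s) (u ++ w)

theorem D.derives {T : Type} {g : ContextFreeGrammar T} {s : List (Symbol T g.NT)} {w : List T}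
    (h : D g s w) : g.Derives s (w.map Symbol.terminal) := by
  induction h with
  | nil => exact Relation.ReflTransGen.refl
  | term a _ ih => exact ih.append_left [Symbol.terminal a]
  | @nt r s u w hr _ _ ih1 ih2 =>
    rw [List.map_append]
    refine ContextFreeGrammar.Produces.trans_derives (v := r.output ++ s) ⟨r, hr, .head s⟩ ?_
    exact (ih1.append_right s).trans (ih2.append_left _)

theorem D.split {T : Type} {g : ContextFreeGrammar T} (s : List (Symbol T g.NT)) :
    ∀ {s' : List (Symbol T g.NT)} {w : List T}, D g (s ++ s') w →
      ∃ u v, w = u ++ v ∧ D g s u ∧ D g s' v := by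
  induction s with
  | nil => intro s' w h; exact ⟨[], w, rfl, .nil, h⟩
  | cons x s ih =>
    intro s' w h
    rw [List.cons_append] at h
    cases h with
    | term a h =>
      obtain ⟨u, v, rfl, h1, h2⟩ := ih h
      exact ⟨a :: u, v, rfl, .term a h1, h2⟩
    | nt r hr h0 h =>
      obtain ⟨u, v, rfl, h1, h2⟩ := ih h
      exact ⟨_ ++ u, v, by simp, .nt r hr h0 h1, h2⟩

theorem D.of_rewrites {T : Type} {g : ContextFreeGrammar T} {r : ContextFreeRule T g.NT}
    (hr : r ∈ g.rules) {s s' : List (Symbol T g.NT)} (h : r.Rewrites s s') :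
    ∀ {w : List T}, D g s' w → D g s w := by
  induction h with
  | head s =>
    intro w h
    obtain ⟨u, v, rfl, h1, h2⟩ := D.split _ h
    exact .nt r hr h1 h2
  | cons x _ ih =>
    intro w h
    cases h with
    | term a h => exact .term a (ih h)
    | nt r' hr' h0 h => exact .nt r' hr' h0 (ih h)

theorem D.of_map {T : Type} {g : ContextFreeGrammar T} (w : List T) :
    D g (w.map Symbol.terminal) w := by
  induction w with
  | nil => exact .nil
  | cons a w ih => exact .term a ih

theorem D.of_derives {T : Type} {g : ContextFreeGrammar T} {s : List (Symbol T g.NT)} {w : List T}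
    (h : g.Derives s (w.map Symbol.terminal)) : D g s w := by
  induction h using Relation.ReflTransGen.head_induction_on with
  | refl => exact D.of_map w
  | head h _ ih =>
    obtain ⟨r, hr, h⟩ := h
    exact D.of_rewrites hr h ih

theorem mem_language {T : Type} (g : ContextFreeGrammar T) (w : List T) :
    w ∈ g.language ↔ D g [Symbol.nonterminal g.initial] w :=
  ⟨D.of_derives, D.derives⟩

inductive Tr {α β Q : Type} (E : Q → β → Q → Prop) (R : Q → α → Q → Prop) :
    Q → List α → List β → Q → Prop
  | nil (p : Q) : Tr E R p [] [] p
  | eps {p p' q : Q} {b : β} {u : List α} {w : List β} :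
      E p b p' → Tr E R p' u w q → Tr E R p u (b :: w) q
  | read {p p' q : Q} {a : α} {u : List α} {w : List β} :
      R p a p' → Tr E R p' u w q → Tr E R p (a :: u) w q

section
variable {α β Q : Type} {E : Q → β → Q → Prop} {R : Q → α → Q → Prop}

theorem Tr.append {p q : Q} {u : List α} {w : List β} (h : Tr E R p u w q) :
    ∀ {q' : Q} {u' : List α} {w' : List β}, Tr E R q u' w' q' →
      Tr E R p (u ++ u') (w ++ w') q' := by
  induction h with
  | nil p => intro q' u' w' h; exact h
  | eps he _ ih => intro q' u' w' h; exact .eps he (ih h)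
  | read he _ ih => intro q' u' w' h; exact .read he (ih h)

theorem Tr.split {p q : Q} {x : List α} {w : List β} (h : Tr E R p x w q) :
    ∀ (u v : List α), x = u ++ v → ∃ w1 w2 p', w = w1 ++ w2 ∧ Tr E R p u w1 p' ∧
      Tr E R p' v w2 q := by
  induction h with
  | nil p =>
    intro u v h
    obtain ⟨rfl, rfl⟩ := List.append_eq_nil_iff.1 h.symm
    exact ⟨[], [], p, rfl, .nil p, .nil p⟩
  | eps he _ ih =>
    intro u v h
    obtain ⟨w1, w2, p', rfl, h1, h2⟩ := ih u v h
    exact ⟨_ :: w1, w2, p', rfl, .eps he h1, h2⟩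
  | @read p p' q a x w he h0 ih =>
    intro u v h
    cases u with
    | nil => exact ⟨[], w, p, rfl, .nil p, by subst h; exact .read he h0⟩
    | cons c u =>
      rw [List.cons_append, List.cons.injEq] at h
      obtain ⟨rfl, h⟩ := h
      obtain ⟨w1, w2, p', rfl, h1, h2⟩ := ih u v h
      exact ⟨w1, w2, p', rfl, .read he h1, h2⟩

theorem Tr.split_cons {p q : Q} {x : List α} {w : List β} (h : Tr E R p x w q) :
    ∀ (a : α) (v : List α), x = a :: v → ∃ w1 w2 p1 p2, w = w1 ++ w2 ∧ Tr E R p [] w1 p1 ∧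
      R p1 a p2 ∧ Tr E R p2 v w2 q := by
  induction h with
  | nil p => intro a v h; cases h
  | eps he _ ih =>
    intro a v h
    obtain ⟨w1, w2, p1, p2, rfl, h1, h2, h3⟩ := ih a v h
    exact ⟨_ :: w1, w2, p1, p2, rfl, .eps he h1, h2, h3⟩
  | @read p p' q a x w he h0 ih =>
    intro a v h
    cases h
    exact ⟨[], w, p, p', rfl, .nil p, he, h0⟩

end

section grammar
variable {α β Q : Type}

abbrev NTT (Q : Type) (g : ContextFreeGrammar α) : Type := Q × List (Symbol α g.NT) × Q

abbrev Rl (β Q : Type) (g : ContextFreeGrammar α) : Type := ContextFreeRule β (NTT Q g)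

def suf (g : ContextFreeGrammar α) : Set (List (Symbol α g.NT)) :=
  {l | l <:+ [Symbol.nonterminal g.initial]} ∪ ⋃ r ∈ g.rules, {l | l <:+ r.output}

theorem suf_finite (g : ContextFreeGrammar α) : (suf g).Finite := by
  have h : ∀ m : List (Symbol α g.NT), {l | l <:+ m}.Finite := by
    intro m
    refine (List.finite_toSet m.tails).subset ?_
    intro l hl
    exact (List.mem_tails l m).2 hl
  exact (h _).union (g.rules.finite_toSet.biUnion fun r _ => h _)

theorem suf_tail (g : ContextFreeGrammar α) {x} {l : List (Symbol α g.NT)}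
    (h : x :: l ∈ suf g) : l ∈ suf g := by
  have h0 : l <:+ x :: l := List.suffix_cons x l
  rcases h with h | h
  · exact Or.inl (h0.trans h)
  · right
    simp only [Set.mem_iUnion] at h ⊢
    obtain ⟨r, hr, h⟩ := h
    exact ⟨r, hr, h0.trans h⟩

theorem suf_output (g : ContextFreeGrammar α) {r} (hr : r ∈ g.rules) : r.output ∈ suf g := by
  right
  simp only [Set.mem_iUnion]
  exact ⟨r, hr, List.suffix_refl _⟩

def rs (g : ContextFreeGrammar α) (E : Q → β → Q → Prop) (R : Q → α → Q → Prop) :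
    Set (Rl β Q g) :=
  {x | (∃ p : Q, x = ⟨(p, [], p), []⟩) ∨
    (∃ (p p' q : Q) (b : β), E p b p' ∧
      x = ⟨(p, [], q), [.terminal b, .nonterminal (p', [], q)]⟩) ∨
    (∃ (p p1 p2 q : Q) (a : α) (l : _), l ∈ suf g ∧ R p1 a p2 ∧
      x = ⟨(p, .terminal a :: l, q), [.nonterminal (p, [], p1), .nonterminal (p2, l, q)]⟩) ∨
    (∃ (p p' q : Q) (r : _) (l : _), r ∈ g.rules ∧ l ∈ suf g ∧
      x = ⟨(p, .nonterminal r.input :: l, q),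
        [.nonterminal (p, r.output, p'), .nonterminal (p', l, q)]⟩)}

theorem rs_finite [Finite α] [Finite β] [Finite Q] (g : ContextFreeGrammar α)
    (E : Q → β → Q → Prop) (R : Q → α → Q → Prop) : (rs g E R).Finite := by
  have : Finite (suf g) := suf_finite g
  refine Set.Finite.union ?_ (Set.Finite.union ?_ (Set.Finite.union ?_ ?_))
  · refine (Set.finite_range fun p : Q => (⟨(p, [], p), []⟩ : Rl β Q g)).subset ?_
    rintro x ⟨p, rfl⟩
    exact ⟨p, rfl⟩
  · refine (Set.finite_range fun y : Q × Q × Q × β => (⟨(y.1, [], y.2.2.1),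
      [.terminal y.2.2.2, .nonterminal (y.2.1, [], y.2.2.1)]⟩ : Rl β Q g)).subset ?_
    rintro x ⟨p, p', q, b, -, rfl⟩
    exact ⟨(p, p', q, b), rfl⟩
  · refine (Set.finite_range fun y : Q × Q × Q × Q × α × suf g =>
      (⟨(y.1, .terminal y.2.2.2.2.1 :: y.2.2.2.2.2.1, y.2.2.2.1),
      [.nonterminal (y.1, [], y.2.1),
        .nonterminal (y.2.2.1, y.2.2.2.2.2.1, y.2.2.2.1)]⟩ : Rl β Q g)).subset ?_
    rintro x ⟨p, p1, p2, q, a, l, hl, -, rfl⟩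
    exact ⟨(p, p1, p2, q, a, ⟨l, hl⟩), rfl⟩
  · refine (Set.finite_range fun y : Q × Q × Q × g.rules × suf g =>
      (⟨(y.1, .nonterminal y.2.2.2.1.1.input :: y.2.2.2.2.1, y.2.2.1),
      [.nonterminal (y.1, y.2.2.2.1.1.output, y.2.1),
        .nonterminal (y.2.1, y.2.2.2.2.1, y.2.2.1)]⟩ : Rl β Q g)).subset ?_
    rintro x ⟨p, p', q, r, l, hr, hl, rfl⟩
    exact ⟨(p, p', q, ⟨r, hr⟩, ⟨l, hl⟩), rfl⟩

noncomputable def gr [Finite α] [Finite β] [Finite Q] (g : ContextFreeGrammar α)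
    (E : Q → β → Q → Prop) (R : Q → α → Q → Prop) (p q : Q) : ContextFreeGrammar β where
  NT := NTT Q g
  initial := (p, [.nonterminal g.initial], q)
  rules := (rs_finite g E R).toFinset

variable [Finite α] [Finite β] [Finite Q] {g : ContextFreeGrammar α}
  {E : Q → β → Q → Prop} {R : Q → α → Q → Prop} {p₀ q₀ : Q}

theorem D.single {T : Type} {g : ContextFreeGrammar T} {i : g.NT} {o : List (Symbol T g.NT)}
    {w : List T} (hr : (⟨i, o⟩ : ContextFreeRule T g.NT) ∈ g.rules)
    (h : D g o w) : D g [.nonterminal i] w := by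
  simpa using D.nt _ hr h .nil

theorem D.pair {T : Type} {g : ContextFreeGrammar T} {x : Symbol T g.NT}
    {l : List (Symbol T g.NT)} {w w' : List T}
    (h1 : D g [x] w) (h2 : D g l w') : D g (x :: l) (w ++ w') := by
  cases h1 with
  | term a h => cases h; exact .term a h2
  | nt r hr h0 h => cases h; simpa using D.nt r hr h0 h2

theorem complete_nil {p q : Q} {u : List α} {w : List β} (h : Tr E R p u w q) :
    u = [] → D (gr g E R p₀ q₀) [.nonterminal (p, [], q)] w := by
  induction h with
  | nil p =>
    intro _
    refine D.single (o := []) ?_ .nil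
    exact (rs_finite g E R).mem_toFinset.2 (Or.inl ⟨p, rfl⟩)
  | @eps p p' q b u w he h ih =>
    intro hu
    refine D.single (o := [.terminal b, .nonterminal (p', [], q)]) ?_ (.term b (ih hu))
    exact (rs_finite g E R).mem_toFinset.2 (Or.inr (Or.inl ⟨p, p', q, b, he, rfl⟩))
  | read => intro h; cases h

theorem complete {l : List (Symbol α g.NT)} {u : List α} (h : D g l u) :
    ∀ {p q : Q} {w : List β}, l ∈ suf g → Tr E R p u w q →
      D (gr g E R p₀ q₀) [.nonterminal (p, l, q)] w := by
  induction h with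
  | nil => intro p q w _ h; exact complete_nil h rfl
  | @term a s u _ ih =>
    intro p q w hl h
    obtain ⟨w1, w2, p1, p2, rfl, h1, h2, h3⟩ := h.split_cons _ _ rfl
    have hs := suf_tail g hl
    refine D.single (o := [.nonterminal (p, [], p1), .nonterminal (p2, s, q)]) ?_
      (D.pair (complete_nil h1 rfl) (ih hs h3))
    exact (rs_finite g E R).mem_toFinset.2
      (Or.inr (Or.inr (Or.inl ⟨p, p1, p2, q, a, s, hs, h2, rfl⟩)))
  | @nt r s u v hr _ _ ih1 ih2 =>
    intro p q w hl h
    obtain ⟨w1, w2, p', rfl, h1, h2⟩ := h.split _ _ rfl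
    have hs := suf_tail g hl
    refine D.single (o := [.nonterminal (p, r.output, p'), .nonterminal (p', s, q)]) ?_
      (D.pair (ih1 (suf_output g hr) h1) (ih2 hs h2))
    exact (rs_finite g E R).mem_toFinset.2
      (Or.inr (Or.inr (Or.inr ⟨p, p', q, r, s, hr, hs, rfl⟩)))

def Sem (g : ContextFreeGrammar α) (E : Q → β → Q → Prop) (R : Q → α → Q → Prop) :
    List (Symbol β (NTT Q g)) → List β → Prop
  | [], w => w = []
  | .terminal b :: s, w => ∃ w', w = b :: w' ∧ Sem g E R s w'
  | .nonterminal x :: s, w => ∃ w1 w2, w = w1 ++ w2 ∧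
      (∃ u, D g x.2.1 u ∧ Tr E R x.1 u w1 x.2.2) ∧ Sem g E R s w2

theorem sound_rule {x : Rl β Q g} (hx : x ∈ rs g E R) {w : List β}
    (h : Sem g E R x.output w) :
    ∃ u, D g x.input.2.1 u ∧ Tr E R x.input.1 u w x.input.2.2 := by
  rcases hx with ⟨p, rfl⟩ | ⟨p, p', q, b, he, rfl⟩ | ⟨p, p1, p2, q, a, l, hl, hR, rfl⟩ |
    ⟨p, p', q, r, l, hr, hl, rfl⟩
  · obtain rfl : w = [] := h
    exact ⟨[], .nil, .nil p⟩
  · obtain ⟨w', rfl, w1, w2, rfl, ⟨u, hu, ht⟩, h⟩ := h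
    obtain rfl : w2 = [] := h
    exact ⟨u, hu, by simpa using Tr.eps he ht⟩
  · obtain ⟨w1, w', rfl, ⟨u, hu, ht⟩, w2, w3, rfl, ⟨v, hv, ht'⟩, h⟩ := h
    obtain rfl : w3 = [] := h
    cases hu
    exact ⟨a :: v, .term a hv, by simpa using ht.append (.read hR ht')⟩
  · obtain ⟨w1, w', rfl, ⟨u, hu, ht⟩, w2, w3, rfl, ⟨v, hv, ht'⟩, h⟩ := h
    obtain rfl : w3 = [] := h
    exact ⟨u ++ v, .nt r hr hu hv, by simpa using ht.append ht'⟩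

theorem sound {s : List (Symbol β (gr g E R p₀ q₀).NT)} {w : List β} (h : D (gr g E R p₀ q₀) s w) :
    Sem g E R s w := by
  induction h with
  | nil => rfl
  | term a _ ih => exact ⟨_, rfl, ih⟩
  | nt r hr _ _ ih1 ih2 =>
    exact ⟨_, _, rfl, sound_rule ((rs_finite g E R).mem_toFinset.1 hr) ih1, ih2⟩

theorem transduce {L : Language α} (hL : L.IsContextFree)
    (E : Q → β → Q → Prop) (R : Q → α → Q → Prop) (p q : Q) :
    Language.IsContextFree {w : List β | ∃ u ∈ L, Tr E R p u w q} := by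
  obtain ⟨g, rfl⟩ := hL
  refine ⟨gr g E R p q, ?_⟩
  ext w
  rw [mem_language]
  constructor
  · intro h
    obtain ⟨w1, w2, rfl, ⟨u, hu, ht⟩, h⟩ := sound h
    obtain rfl : w2 = [] := h
    exact ⟨u, (mem_language g u).2 hu, by rw [List.append_nil]; exact ht⟩
  · rintro ⟨u, hu, ht⟩
    exact complete ((mem_language g u).1 hu) (Or.inl (List.suffix_refl _)) ht

end grammar

section seq
variable {α β Q : Type}

def run (step : Q → β → Q) : Q → List β → Q
  | q, [] => q
  | q, b :: w => run step (step q b) w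

def outs (step : Q → β → Q) (out : Q → β → List α) : Q → List β → List α
  | _, [] => []
  | q, b :: w => out q b ++ outs step out (step q b) w

theorem seqInv [Finite α] [Finite β] [Finite Q] {L : Language α} (hL : L.IsContextFree)
    (step : Q → β → Q) (out : Q → β → List α) (q₀ q₁ : Q) :
    Language.IsContextFree {w : List β | run step q₀ w = q₁ ∧ outs step out q₀ w ∈ L} := by
  obtain ⟨n, hn⟩ : ∃ n, ∀ q b, (out q b).length ≤ n := by
    obtain ⟨n, hn⟩ := (Set.finite_range fun x : Q × β => (out x.1 x.2).length).bddAbove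
    exact ⟨n, fun q b => hn ⟨(q, b), rfl⟩⟩
  have : Finite {l : List α // l.length ≤ n} := List.finite_length_le α n
  let S := Q × {l : List α // l.length ≤ n}
  let E : S → β → S → Prop := fun p b p' =>
    p.2.1 = [] ∧ p'.1 = step p.1 b ∧ p'.2.1 = out p.1 b
  let R : S → α → S → Prop := fun p a p' => p.2.1 = a :: p'.2.1 ∧ p'.1 = p.1
  have key1 : ∀ {p q : S} {u : List α} {w : List β}, Tr E R p u w q → q.2.1 = [] →
      u = p.2.1 ++ outs step out p.1 w ∧ q.1 = run step p.1 w := by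
    intro p q u w h
    induction h with
    | nil p => intro h; simp [h, outs, run]
    | eps he _ ih =>
      intro h
      obtain ⟨h1, h2⟩ := ih h
      obtain ⟨e1, e2, e3⟩ := he
      rw [h1, h2, e1, e2, e3]
      exact ⟨rfl, rfl⟩
    | read he _ ih =>
      intro h
      obtain ⟨h1, h2⟩ := ih h
      obtain ⟨e1, e2⟩ := he
      rw [h1, h2, e1, e2]
      exact ⟨rfl, rfl⟩
  have key2 : ∀ (w : List β) (s : List α) (hs : s.length ≤ n) (q : Q),
      Tr E R (q, ⟨s, hs⟩) (s ++ outs step out q w) w (run step q w, ⟨[], Nat.zero_le n⟩) := by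
    intro w
    induction w with
    | nil =>
      intro s
      induction s with
      | nil => intro hs q; exact .nil _
      | cons a s ih =>
        intro hs q
        have hs' : s.length ≤ n := (Nat.le_succ _).trans hs
        exact .read (p' := (q, ⟨s, hs'⟩)) ⟨rfl, rfl⟩ (ih hs' q)
    | cons b w ihw =>
      intro s
      induction s with
      | nil =>
        intro hs q
        exact .eps (p' := (step q b, ⟨out q b, hn q b⟩)) ⟨rfl, rfl, rfl⟩ (ihw _ _ _)
      | cons a s ih =>
        intro hs q
        have hs' : s.length ≤ n := (Nat.le_succ _).trans hs
        exact .read (p' := (q, ⟨s, hs'⟩)) ⟨rfl, rfl⟩ (ih hs' q)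
  refine cf_congr (transduce hL E R (q₀, ⟨[], Nat.zero_le n⟩) (q₁, ⟨[], Nat.zero_le n⟩))
    fun w => ?_
  constructor
  · rintro ⟨rfl, h⟩
    exact ⟨_, h, key2 w [] (Nat.zero_le n) q₀⟩
  · rintro ⟨u, hu, ht⟩
    obtain ⟨h1, h2⟩ := key1 ht rfl
    simp only [List.nil_append] at h1
    subst h1
    exact ⟨h2.symm, hu⟩

end seq

theorem exists_pres (G : Type) [Group G] [Group.FG G] :
    ∃ (α : Type) (_ : Fintype α) (ψ : α → G), ∀ g : G, ∃ w : List α, (w.map ψ).prod = g := by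
  obtain ⟨S, hS⟩ := (Monoid.fg_def.1 (Group.fg_iff_monoid_fg.1 ‹Group.FG G›))
  refine ⟨S, inferInstance, Subtype.val, fun g => ?_⟩
  obtain ⟨l, hl, rfl⟩ := Submonoid.exists_list_of_mem_closure (s := (S : Set G)) (x := g)
    (by rw [hS]; trivial)
  lift l to List S using hl
  exact ⟨l, rfl⟩

end CFPair

/-- Let `H` be a finite-index subgroup of a finitely generated group `G`
and `K ≤ H`. Then `(G,K)` is context-free iff `(H,K)` is context-free, where each pair is
context-free iff its word problem is context-free for any semigroup presentation. -/
theorem contextFree_pair_iff_of_finiteIndex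
    {G : Type} [Group G] [Group.FG G] (H : Subgroup G) [H.FiniteIndex]
    (K : Subgroup G) (hKH : K ≤ H) :
    (∀ (α : Type) (_ : Fintype α) (ψ : α → G),
        (∀ g : G, ∃ w : List α, (w.map ψ).prod = g) →
        Language.IsContextFree {w : List α | (w.map ψ).prod ∈ K}) ↔
    (∀ (β : Type) (_ : Fintype β) (ψ : β → H),
        (∀ h : H, ∃ w : List β, (w.map ψ).prod = h) →
        Language.IsContextFree {w : List β | ((w.map ψ).prod : G) ∈ K}) := by
  classical
  constructor
  · intro h β _ ψ _
    obtain ⟨α, hα, φ, hφ⟩ := CFPair.exists_pres G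
    choose W hW using hφ
    have h2 := CFPair.seqInv (β := β) (Q := Unit) (h α hα φ fun g => ⟨W g, hW g⟩)
      (fun _ _ => ()) (fun _ b => W (ψ b)) () ()
    refine CFPair.cf_congr h2 fun w => ?_
    have key : ((CFPair.outs (fun _ _ => ()) (fun _ b => W (ψ b)) () w).map φ).prod =
        ((w.map ψ).prod : G) := by
      induction w with
      | nil => simp [CFPair.outs]
      | cons b w ih => simp [CFPair.outs, hW, ih]
    change ((w.map ψ).prod : G) ∈ K ↔ _ ∧ (List.map φ _).prod ∈ K
    rw [key]
    simp
  · intro h α _ ψ _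
    obtain ⟨β, hβ, φ, hφ⟩ := CFPair.exists_pres H
    choose W hW using hφ
    obtain ⟨t, ht, ht1⟩ : ∃ t : G ⧸ H → G, (∀ q, (t q : G ⧸ H) = q) ∧
        t ((1 : G) : G ⧸ H) = 1 := by
      refine ⟨fun q => if q = ((1 : G) : G ⧸ H) then 1 else q.out, fun q => ?_, by simp⟩
      dsimp only
      split_ifs with hq
      · exact hq.symm
      · exact Quotient.out_eq' q
    let step : G ⧸ H → α → G ⧸ H := fun q a => (((ψ a)⁻¹ * t q : G) : G ⧸ H)
    have hmem : ∀ q a, (t q)⁻¹ * ψ a * t (step q a) ∈ H := by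
      intro q a
      have := (QuotientGroup.eq (s := H)).1 (ht (step q a)).symm
      simpa [mul_assoc] using this
    let out : G ⧸ H → α → List β := fun q a => W ⟨_, hmem q a⟩
    have h2 := CFPair.seqInv (h β hβ φ fun g => ⟨W g, hW g⟩) step out
      ((1 : G) : G ⧸ H) ((1 : G) : G ⧸ H)
    refine CFPair.cf_congr h2 fun w => ?_
    have key : ∀ q, (((CFPair.outs step out q w).map φ).prod : G) =
        (t q)⁻¹ * (w.map ψ).prod * t (CFPair.run step q w) := by
      induction w with
      | nil => intro q; simp [CFPair.outs, CFPair.run]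
      | cons a w ih =>
        intro q
        simp only [CFPair.outs, CFPair.run, List.map_append, List.prod_append, List.map_cons,
          List.prod_cons, Subgroup.coe_mul, ih, out, hW]
        group
    have key1 := key ((1 : G) : G ⧸ H)
    rw [ht1, inv_one, one_mul] at key1
    change (w.map ψ).prod ∈ K ↔ _ ∧ (((List.map φ _).prod : H) : G) ∈ K
    rw [key1]
    constructor
    · intro hw
      have hr : CFPair.run step ((1 : G) : G ⧸ H) w = ((1 : G) : G ⧸ H) := by
        rw [← ht (CFPair.run step ((1 : G) : G ⧸ H) w)]
        refine (QuotientGroup.eq.2 ?_).symm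
        rw [inv_one, one_mul]
        refine (H.mul_mem_cancel_left (hKH hw)).1 ?_
        rw [← key1]
        exact Subtype.property _
      refine ⟨hr, ?_⟩
      rw [hr, ht1, mul_one]
      exact hw
    · rintro ⟨hr, hw⟩
      rw [hr, ht1, mul_one] at hw
      exact hw
end

section
/- Let G be a finitely generated group with semigroup presentation ψ : Σ → G, and let K be a finite subgroup of G. Then the language L(G,K,ψ) = { w ∈ Σ* : ψ(w) ∈ K } is context-free if and only if the language L(G,{1},ψ) = { w ∈ Σ* : ψ(w) = 1 } is context-free (i.e., if and only if G is a context-free group). -/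
namespace CFPair

open ContextFreeGrammar

variable {α β M : Type} [Monoid M]

/-- An annotated nonterminal is good if it is reachable and realizable. -/
def Good (g : ContextFreeGrammar α) (pr : β → α) (val : β → M) (A : g.NT) (m : M) : Prop :=
  (∃ x y : List α, g.Derives [Symbol.nonterminal g.initial]
    (x.map Symbol.terminal ++ [Symbol.nonterminal A] ++ y.map Symbol.terminal)) ∧
  ∃ z : List β, g.Derives [Symbol.nonterminal A] ((z.map pr).map Symbol.terminal) ∧
    (z.map val).prod = m

/-- Annotation of a sentential form. -/
inductive Rel (g : ContextFreeGrammar α) (pr : β → α) (out : β → List α) (val : β → M) :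
    M → List (Symbol α g.NT) → List (Symbol α (g.NT × Option M)) → Prop
  | nil : Rel g pr out val 1 [] []
  | term (b : β) {m u v} (h : Rel g pr out val m u v) :
      Rel g pr out val (val b * m) (Symbol.terminal (pr b) :: u)
        ((out b).map Symbol.terminal ++ v)
  | nt (A : g.NT) (n : M) (hA : Good g pr val A n) {m u v} (h : Rel g pr out val m u v) :
      Rel g pr out val (n * m) (Symbol.nonterminal A :: u)
        (Symbol.nonterminal (A, some n) :: v)

variable {g : ContextFreeGrammar α} {pr : β → α} {out : β → List α} {val : β → M}

lemma Rel.append {m u v} (h : Rel g pr out val m u v) {m' u' v'}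
    (h' : Rel g pr out val m' u' v') :
    Rel g pr out val (m * m') (u ++ u') (v ++ v') := by
  induction h with
  | nil => simpa using h'
  | term b h ih => simpa [mul_assoc] using Rel.term b ih
  | nt A n hA h ih => simpa [mul_assoc] using Rel.nt A n hA ih

lemma Rel.split (u : List (Symbol α g.NT)) {u'} : ∀ {m w}, Rel g pr out val m (u ++ u') w →
    ∃ m₁ m₂ v v', m = m₁ * m₂ ∧ w = v ++ v' ∧ Rel g pr out val m₁ u v ∧
      Rel g pr out val m₂ u' v' := by
  induction u with
  | nil => intro m w h; exact ⟨1, m, [], w, by simp, by simp, Rel.nil, h⟩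
  | cons a u ih =>
    intro m w h
    rw [List.cons_append] at h
    cases h with
    | term b h =>
      obtain ⟨m₁, m₂, v, v', rfl, rfl, h1, h2⟩ := ih h
      exact ⟨_, m₂, _, v', (mul_assoc _ _ _).symm, by simp, Rel.term b h1, h2⟩
    | nt A n hA h =>
      obtain ⟨m₁, m₂, v, v', rfl, rfl, h1, h2⟩ := ih h
      exact ⟨_, m₂, _, v', (mul_assoc _ _ _).symm, by simp, Rel.nt A n hA h1, h2⟩

lemma Rel.realize {m u v} (h : Rel g pr out val m u v) :
    ∃ z : List β, g.Derives u ((z.map pr).map Symbol.terminal) ∧ (z.map val).prod = m := by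
  induction h with
  | nil => exact ⟨[], by simp; rfl, by simp⟩
  | term b h ih =>
    obtain ⟨z, hz, rfl⟩ := ih
    exact ⟨b :: z, by simpa using hz.append_left [Symbol.terminal (pr b)], by simp⟩
  | nt A n hA h ih =>
    obtain ⟨z, hz, rfl⟩ := ih
    obtain ⟨-, y, hy, rfl⟩ := hA
    refine ⟨y ++ z, ?_, by simp⟩
    have h1 := hy.append_right (g := g) (by assumption)
    have h2 := hz.append_left ((y.map pr).map Symbol.terminal)
    simpa using h1.trans h2

lemma Rel.of_word (z : List β) : Rel g pr out val (z.map val).prod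
    ((z.map pr).map Symbol.terminal) ((z.flatMap out).map Symbol.terminal) := by
  induction z with
  | nil => exact Rel.nil
  | cons b z ih => simpa using Rel.term b ih

lemma Rel.word {m u v} (h : Rel g pr out val m u v) : ∀ w : List α, v = w.map Symbol.terminal →
    ∃ z : List β, u = (z.map pr).map Symbol.terminal ∧ z.flatMap out = w ∧
      (z.map val).prod = m := by
  induction h with
  | nil =>
    intro w hw
    have : w = [] := by simpa using hw.symm
    exact ⟨[], by simp [this]⟩
  | term b h ih =>
    intro w hw
    obtain ⟨w1, w2, rfl, h1, h2⟩ := List.map_eq_append_iff.1 hw.symm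
    obtain ⟨z, rfl, rfl, rfl⟩ := ih w2 h2.symm
    have : w1 = out b :=
      List.map_injective_iff.2 (fun _ _ h => by simpa using h) h1
    exact ⟨b :: z, by simp [this]⟩
  | nt A n hA h ih =>
    intro w hw
    cases w <;> simp at hw

lemma finite_rel [Finite β] (hfin : ∀ A, {m | Good g pr val A m}.Finite)
    (u : List (Symbol α g.NT)) :
    {x : M × List (Symbol α (g.NT × Option M)) | Rel g pr out val x.1 u x.2}.Finite := by
  induction u with
  | nil =>
    refine (Set.finite_singleton (1, [])).subset ?_
    rintro ⟨m, v⟩ h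
    simp only [Set.mem_ofPred_eq] at h
    cases h
    rfl
  | cons a u ih =>
    have h1 := ((Set.finite_univ (α := β)).prod ih).image
      (fun x : β × (M × List (Symbol α (g.NT × Option M))) =>
        (val x.1 * x.2.1, (out x.1).map Symbol.terminal ++ x.2.2))
    cases a with
    | terminal a =>
      refine h1.subset ?_
      rintro ⟨m, v⟩ h
      simp only [Set.mem_ofPred_eq] at h
      cases h with
      | term b h => exact ⟨(b, _, _), ⟨trivial, h⟩, rfl⟩
    | nonterminal A =>
      have h2 := ((hfin A).prod ih).image
        (fun x : M × (M × List (Symbol α (g.NT × Option M))) =>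
          (x.1 * x.2.1, Symbol.nonterminal (A, some x.1) :: x.2.2))
      refine h2.subset ?_
      rintro ⟨m, v⟩ h
      simp only [Set.mem_ofPred_eq] at h
      cases h with
      | nt A n hA h => exact ⟨(n, _, _), ⟨hA, h⟩, rfl⟩

lemma rewrites_terminals {N : Type} {r : ContextFreeRule α N} (o : List α) :
    ∀ {s s' : List (Symbol α N)}, r.Rewrites (o.map Symbol.terminal ++ s) s' →
      ∃ s₀, s' = o.map Symbol.terminal ++ s₀ ∧ r.Rewrites s s₀ := by
  induction o with
  | nil => intro s s' h; exact ⟨s', by simp, by simpa using h⟩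
  | cons a o ih =>
    intro s s' h
    rw [List.map_cons, List.cons_append] at h
    cases h with
    | cons _ h =>
      obtain ⟨s₀, rfl, h'⟩ := ih h
      exact ⟨s₀, by simp, h'⟩

lemma Rel.step (r : ContextFreeRule α (g.NT × Option M))
    (hr : ∀ A m, r.input = (A, some m) →
      ∃ r₀ ∈ g.rules, r₀.input = A ∧ Rel g pr out val m r₀.output r.output)
    {m u v} (h : Rel g pr out val m u v) :
    ∀ v', r.Rewrites v v' → ∃ u', g.Derives u u' ∧ Rel g pr out val m u' v' := by
  induction h with
  | nil => intro v' h; cases h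
  | term b h ih =>
    intro v' hv
    obtain ⟨s, rfl, hs⟩ := rewrites_terminals _ hv
    obtain ⟨u', h1, h2⟩ := ih s hs
    exact ⟨_, by simpa using h1.append_left [Symbol.terminal (pr b)], Rel.term b h2⟩
  | nt A n hA h ih =>
    intro v' hv
    generalize hX : (A, some n) = X at hv
    cases hv with
    | head s =>
      obtain ⟨r₀, hr₀, rfl, h'⟩ := hr A n hX.symm
      exact ⟨_, Relation.ReflTransGen.single ⟨r₀, hr₀, ContextFreeRule.Rewrites.head _⟩,
        h'.append h⟩
    | cons _ hs =>
      subst hX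
      obtain ⟨u', h1, h2⟩ := ih _ hs
      exact ⟨_, by simpa using h1.append_left [Symbol.nonterminal A], Rel.nt A n hA h2⟩

/-- The rules of the annotated grammar. -/
def ruleSet (g : ContextFreeGrammar α) (pr : β → α) (out : β → List α) (val : β → M)
    (F : Set M) : Set (ContextFreeRule α (g.NT × Option M)) :=
  {r | ∃ r₀ ∈ g.rules, ∃ m, Rel g pr out val m r₀.output r.output ∧
      r.input = (r₀.input, some m)} ∪
  {r | ∃ m, Good g pr val g.initial m ∧ m ∈ F ∧
    r = ⟨(g.initial, none), [Symbol.nonterminal (g.initial, some m)]⟩}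

lemma ruleSet_finite [Finite β] (hfin : ∀ A, {m | Good g pr val A m}.Finite) (F : Set M) :
    (ruleSet g pr out val F).Finite := by
  refine Set.Finite.union ?_ ?_
  · refine (Set.Finite.biUnion g.rules.finite_toSet (t := fun r₀ =>
      (fun x : M × List (Symbol α (g.NT × Option M)) =>
        (⟨(r₀.input, some x.1), x.2⟩ : ContextFreeRule α (g.NT × Option M))) ''
        {x | Rel g pr out val x.1 r₀.output x.2}) fun r₀ _ =>
          (finite_rel hfin r₀.output).image _).subset ?_
    rintro ⟨i, o⟩ ⟨r₀, hr₀, m, h, hi⟩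
    simp only at h hi
    subst hi
    exact Set.mem_biUnion hr₀ ⟨(m, o), h, rfl⟩
  · refine ((hfin g.initial).image (fun m =>
      (⟨(g.initial, none), [Symbol.nonterminal (g.initial, some m)]⟩ :
        ContextFreeRule α (g.NT × Option M)))).subset ?_
    rintro _ ⟨m, h, -, rfl⟩
    exact ⟨m, h, rfl⟩

theorem main [Finite β] (g : ContextFreeGrammar α) (pr : β → α) (out : β → List α) (val : β → M)
    (hfin : ∀ A, {m | Good g pr val A m}.Finite) (F : Set M) :
    Language.IsContextFree {w : List α | ∃ z : List β, z.map pr ∈ g.language ∧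
      (z.map val).prod ∈ F ∧ z.flatMap out = w} := by
  let G : ContextFreeGrammar α :=
    ⟨g.NT × Option M, (g.initial, none), (ruleSet_finite (out := out) hfin F).toFinset⟩
  have hG : ∀ r, r ∈ G.rules ↔ r ∈ ruleSet g pr out val F := fun r => by simp [G]
  refine ⟨G, ?_⟩
  ext w
  constructor
  · intro hw
    rw [mem_language_iff] at hw
    have key : ∀ s, G.Derives [Symbol.nonterminal G.initial] s →
        s = [Symbol.nonterminal G.initial] ∨ ∃ u m, m ∈ F ∧
          g.Derives [Symbol.nonterminal g.initial] u ∧ Rel g pr out val m u s := by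
      intro s hs
      induction hs with
      | refl => exact Or.inl rfl
      | @tail b c _ hp ih =>
        obtain ⟨r, hr, hrw⟩ := hp
        rw [hG] at hr
        right
        rcases ih with rfl | ⟨u, m, hm, hu, hrel⟩
        · have hX : r.input = (g.initial, none) ∧ r.output = c := by
            generalize hY : G.initial = Y at hrw
            cases hrw with
            | head s => exact ⟨hY.symm, (List.append_nil _).symm⟩
            | cons _ h => cases h
          rcases hr with ⟨r₀, hr₀, m, h, hi⟩ | ⟨m, hg, hm, rfl⟩
          · rw [hX.1] at hi; simp at hi
          · refine ⟨_, m, hm, Relation.ReflTransGen.refl, ?_⟩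
            rw [← hX.2]
            simpa using Rel.nt g.initial m hg (Rel.nil (out := out))
        · obtain ⟨u', h1, h2⟩ := hrel.step r (by
            intro A m hi
            rcases hr with ⟨r₀, hr₀, m', h, hi'⟩ | ⟨m, hg, hm, rfl⟩
            · rw [hi'] at hi
              simp only [Prod.mk.injEq, Option.some.injEq] at hi
              obtain ⟨rfl, rfl⟩ := hi
              exact ⟨r₀, hr₀, rfl, h⟩
            · simp at hi) _ hrw
          exact ⟨u', m, hm, hu.trans h1, h2⟩
    rcases key _ hw with h | ⟨u, m, hm, hu, hrel⟩
    · cases w <;> simp at h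
    · obtain ⟨z, rfl, rfl, rfl⟩ := hrel.word w rfl
      exact ⟨z, hu, hm, rfl⟩
  · rintro ⟨z, hz, hF, rfl⟩
    rw [mem_language_iff] at hz ⊢
    have key : ∀ u, g.Derives u ((z.map pr).map Symbol.terminal) →
        g.Derives [Symbol.nonterminal g.initial] u →
        ∃ v, Rel g pr out val (z.map val).prod u v ∧
          G.Derives v ((z.flatMap out).map Symbol.terminal) := by
      intro u hu
      induction hu using Relation.ReflTransGen.head_induction_on with
      | refl => intro _; exact ⟨_, Rel.of_word z, Relation.ReflTransGen.refl⟩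
      | head hp _ ih =>
        intro hS
        obtain ⟨v, hv, hd⟩ := ih (hS.trans_produces hp)
        obtain ⟨r, hr, hrw⟩ := hp
        obtain ⟨p, q, rfl, rfl⟩ := hrw.exists_parts
        obtain ⟨m', m₃, v', v₃, hm, rfl, h', h₃⟩ := Rel.split _ hv
        obtain ⟨m₁, m₂, v₁, v₂, rfl, rfl, h₁, h₂⟩ := Rel.split _ h'
        obtain ⟨z₁, hz₁, hm₁⟩ := h₁.realize
        obtain ⟨z₂, hz₂, hm₂⟩ := h₂.realize
        obtain ⟨z₃, hz₃, hm₃⟩ := h₃.realize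
        have good : Good g pr val r.input m₂ := by
          refine ⟨⟨z₁.map pr, z₃.map pr, hS.trans ?_⟩, z₂, ?_, hm₂⟩
          · exact ((hz₁.append_right _).append_right _).trans (hz₃.append_left _)
          · exact Produces.trans_derives ⟨r, hr, ContextFreeRule.Rewrites.input_output⟩ hz₂
        refine ⟨v₁ ++ [Symbol.nonterminal (r.input, some m₂)] ++ v₃, ?_, ?_⟩
        · rw [hm]
          refine (h₁.append ?_).append h₃
          simpa using Rel.nt r.input m₂ good (Rel.nil (out := out))
        · refine Produces.trans_derives ?_ hd
          refine ⟨⟨(r.input, some m₂), v₂⟩, (hG _).2 (Or.inl ⟨r, hr, m₂, h₂, rfl⟩), ?_⟩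
          exact ContextFreeRule.rewrites_of_exists_parts _ _ _
    obtain ⟨v, hv, hd⟩ := key _ hz Relation.ReflTransGen.refl
    have : v = [Symbol.nonterminal (g.initial, some (z.map val).prod)] := by
      generalize (z.map val).prod = m at hv
      cases hv with
      | nt A n hA h => cases h; simp
    subst this
    have good : Good g pr val g.initial (z.map val).prod :=
      ⟨⟨[], [], by simp; rfl⟩, z, hz, rfl⟩
    refine Produces.trans_derives ?_ hd
    refine ⟨_, (hG _).2 (Or.inr ⟨_, good, hF, rfl⟩), ?_⟩
    exact ContextFreeRule.Rewrites.input_output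

lemma congr {L L' : Language α} (h : L.IsContextFree) (e : ∀ w, w ∈ L' ↔ w ∈ L) :
    L'.IsContextFree := by
  have : L' = L := by ext w; exact e w
  rwa [this]

/-- The automaton recognizing kept words followed by short erased words. -/
noncomputable def step (N : ℕ) (q : Option {l : List α // l.length ≤ N}) (b : α ⊕ α) :
    Option {l : List α // l.length ≤ N} :=
  match q, b with
  | none, _ => none
  | some l, Sum.inl _ => open Classical in if l.1 = [] then some l else none
  | some l, Sum.inr a => if h : (l.1 ++ [a]).length ≤ N then some ⟨l.1 ++ [a], h⟩ else none

lemma foldl_step (N : ℕ) (z : List (α ⊕ α)) (v : {l : List α // l.length ≤ N}) :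
    z.foldl (step N) (some ⟨[], by simp⟩) = some v ↔
      ∃ w : List α, z = w.map Sum.inl ++ v.1.map Sum.inr := by
  induction z using List.reverseRecOn generalizing v with
  | nil =>
    obtain ⟨v, hv⟩ := v
    simp only [List.foldl_nil, Option.some.injEq, Subtype.mk.injEq]
    constructor
    · rintro rfl
      exact ⟨[], rfl⟩
    · rintro ⟨w, hw⟩
      have := (List.append_eq_nil_iff.1 hw.symm).2
      exact (List.map_eq_nil_iff.1 this).symm
  | append_singleton z b ih =>
    rw [List.foldl_append, List.foldl_cons, List.foldl_nil]
    constructor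
    · intro h
      generalize hq : z.foldl (step N) (some ⟨[], by simp⟩) = q at h
      rcases q with _ | l
      · simp [step] at h
      · obtain ⟨w, rfl⟩ := (ih l).1 hq
        rcases b with a | a
        · simp only [step] at h
          split_ifs at h with hl
          simp only [Option.some.injEq] at h
          subst h
          exact ⟨w ++ [a], by simp [hl]⟩
        · simp only [step] at h
          split_ifs at h with hl
          simp only [Option.some.injEq] at h
          subst h
          exact ⟨w, by simp⟩
    · rintro ⟨w, hw⟩
      obtain ⟨v, hv⟩ := v
      rcases List.eq_nil_or_concat v with rfl | ⟨v', a, rfl⟩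
      · rcases List.eq_nil_or_concat w with rfl | ⟨w', c, rfl⟩
        · simp at hw
        · simp only [List.concat_eq_append, List.map_append, List.map_cons, List.map_nil,
            List.append_nil] at hw
          obtain ⟨rfl, hb⟩ := List.append_inj' hw rfl
          simp only [List.cons.injEq, and_true] at hb
          subst hb
          rw [(ih ⟨[], by simp⟩).2 ⟨w', by simp⟩]
          simp [step]
      · simp only [List.concat_eq_append, List.map_append, List.map_cons, List.map_nil,
            ← List.append_assoc] at hw
        obtain ⟨rfl, hb⟩ := List.append_inj' hw rfl
        simp only [List.cons.injEq, and_true] at hb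
        subst hb
        have hv' : v'.length ≤ N := by simp at hv; omega
        rw [(ih ⟨v', hv'⟩).2 ⟨w, by simp⟩]
        simp at hv
        simp [step, hv]

lemma prod_val {Q B : Type} (f : Q → B → Q) (z : List B) (q : Q) :
    ((z.map fun b => MulOpposite.op (show Function.End Q from fun q => f q b)).prod).unop q
      = z.foldl f q := by
  induction z generalizing q with
  | nil => rfl
  | cons b z ih => 
    rw [List.foldl_cons, ← ih]
    rfl

/-- Quotient of a context-free language by a finite set of words. -/
theorem quotient [Finite α] {L : Language α} (hL : L.IsContextFree) (V : Set (List α))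
    (hV : V.Finite) : Language.IsContextFree {w : List α | ∃ v ∈ V, w ++ v ∈ L} := by
  obtain ⟨g, rfl⟩ := hL
  obtain ⟨N, hN⟩ : ∃ N, ∀ v ∈ V, v.length ≤ N := by
    obtain ⟨N, hN⟩ := (hV.image List.length).bddAbove
    exact ⟨N, fun v hv => hN ⟨v, hv, rfl⟩⟩
  let Q := Option {l : List α // l.length ≤ N}
  have : Finite {l : List α // l.length ≤ N} := (List.finite_length_le α N).to_subtype
  have : Finite Q := inferInstanceAs (Finite (Option _))
  have : Finite (Function.End Q) := inferInstanceAs (Finite (Q → Q))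
  have : Finite (Function.End Q)ᵐᵒᵖ := Finite.of_equiv _ MulOpposite.opEquiv
  let val : α ⊕ α → (Function.End Q)ᵐᵒᵖ :=
    fun b => MulOpposite.op (show Function.End Q from fun q => step N q b)
  have key := main g (Sum.elim id id) (Sum.elim (fun a => [a]) (fun _ => [])) val
    (fun A => Set.toFinite _)
    {m | ∃ v : {l : List α // l.length ≤ N}, v.1 ∈ V ∧ m.unop (some ⟨[], by simp⟩) = some v}
  refine congr key fun w => ?_
  constructor
  · rintro ⟨v, hv, h⟩
    refine ⟨w.map Sum.inl ++ v.map Sum.inr, ?_, ⟨⟨v, hN v hv⟩, hv, ?_⟩, ?_⟩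
    · simpa using h
    · rw [prod_val, foldl_step]
      exact ⟨w, rfl⟩
    · simp [List.flatMap_append, List.flatMap_map]
  · rintro ⟨z, hz, ⟨v, hv, h⟩, rfl⟩
    rw [prod_val, foldl_step] at h
    obtain ⟨w, rfl⟩ := h
    refine ⟨v.1, hv, ?_⟩
    have e : ∀ l : List α, l.flatMap (fun _ => ([] : List α)) = [] := by simp
    simpa [List.flatMap_append, List.flatMap_map, e] using hz

end CFPair

/-- For a finite subgroup `K` of a finitely generated group `G`,
the language `L(G,K,ψ)` is context-free iff the word problem `L(G,{1},ψ)` of `G` is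
context-free (i.e. iff `G` is a context-free group). -/
theorem contextFree_pair_finite_subgroup_iff
    {G : Type} [Group G] [Group.FG G] (K : Subgroup G) (hK : (K : Set G).Finite)
    {α : Type} [Fintype α] (ψ : α → G)
    (hψ : ∀ g : G, ∃ w : List α, (w.map ψ).prod = g) :
    Language.IsContextFree {w : List α | (w.map ψ).prod ∈ K} ↔
      Language.IsContextFree {w : List α | (w.map ψ).prod = 1} := by
  constructor
  · rintro ⟨g, hg⟩
    have hmem : ∀ w : List α, w ∈ g.language ↔ (w.map ψ).prod ∈ K := by
      intro w; rw [hg]; rfl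
    have key := CFPair.main g (id : α → α) (fun a => [a]) ψ (by
      intro A
      by_cases hA : ∃ x y : List α, g.Derives [Symbol.nonterminal g.initial]
        (x.map Symbol.terminal ++ [Symbol.nonterminal A] ++ y.map Symbol.terminal)
      · obtain ⟨x, y, hxy⟩ := hA
        refine (hK.image (fun k => (x.map ψ).prod⁻¹ * k * (y.map ψ).prod⁻¹)).subset ?_
        rintro m ⟨-, z, hz, rfl⟩
        refine ⟨(x.map ψ).prod * (z.map ψ).prod * (y.map ψ).prod, ?_, by group⟩
        have h1 := hxy.trans ((hz.append_left (x.map Symbol.terminal)).append_right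
          (y.map Symbol.terminal))
        have h2 : (x ++ z ++ y) ∈ g.language := by
          rw [ContextFreeGrammar.mem_language_iff]
          simpa using h1
        simpa [mul_assoc] using (hmem _).1 h2
      · convert Set.finite_empty
        ext m
        simp only [Set.mem_ofPred_eq, Set.mem_empty_iff_false, iff_false]
        exact fun h => hA h.1) {1}
    refine CFPair.congr key fun w => ?_
    constructor
    · intro h
      have h : (w.map ψ).prod = 1 := h
      refine ⟨w, ?_, h, by simp⟩
      rw [hmem]
      simp [h]
    · rintro ⟨z, -, h, rfl⟩
      have h : (z.map ψ).prod = 1 := h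
      change ((z.flatMap fun a => [a]).map ψ).prod = 1
      simpa using h
  · intro h
    choose f hf using hψ
    have key := CFPair.quotient h (f '' K) (hK.image f)
    refine CFPair.congr key fun w => ?_
    constructor
    · intro hw
      have hw : (w.map ψ).prod ∈ K := hw
      refine ⟨_, ⟨_, K.inv_mem hw, rfl⟩, ?_⟩
      change ((w ++ _).map ψ).prod = 1
      simp [hf]
    · rintro ⟨_, ⟨k, hk, rfl⟩, h⟩
      have h : ((w ++ f k).map ψ).prod = 1 := h
      rw [List.map_append, List.prod_append, hf] at h
      change (w.map ψ).prod ∈ K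
      rw [eq_inv_of_mul_eq_one_left h]
      exact K.inv_mem hk
end
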